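/- (Theorem 1, Euclidean form.) Fix M ∈ ℕ and work in M-dimensional Euclidean space with the Euclidean distance d. Let z, z̃, z_q ∈ ℝ^M satisfy d(z̃, z_q) ≤ d(z̃, z), and let b ≥ 0 be a real number. Then b² ≤ 5·((d(z, z_q) − b)² + d(z, z̃)²). -/

import Mathlib

theorem thm1_euclidean (M : ℕ) (z ztil zq : EuclideanSpace ℝ (Fin M))
    (h : dist ztil zq ≤ dist ztil z) (b : ℝ) (hb : 0 ≤ b) :
    b ^ 2 ≤ 5 * ((dist z zq - b) ^ 2 + dist z ztil ^ 2) := by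
  have h1 : dist z zq ≤ 2 * dist z ztil := by
    have h2 := dist_triangle z ztil zq
    rw [dist_comm ztil z] at h
    linarith
  have h3 : dist z zq ^ 2 ≤ (2 * dist z ztil) ^ 2 :=
    pow_le_pow_left₀ dist_nonneg h1 2
  nlinarith [sq_nonneg (2 * b - 5 / 2 * dist z zq)]
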